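/- For all n, r ≥ 2 with n·r > 6, there exists a linear map H : Matrix (Fin n) (Fin n) ℂ →ₗ[ℂ] Matrix (Fin r) (Fin r) ℂ that maps every positive semidefinite matrix to a positive semidefinite matrix but is not decomposable. -/

import Mathlib

open Matrix ComplexOrder

/-- A linear map `H` on matrices is decomposable if
`H(X) = Σ_p V_pᴴ·X·V_p + Σ_p W_pᴴ·Xᵀ·W_p` for some matrices `V_p`, `W_p`. -/
def IsDecomposableMap {n r : ℕ}
    (H : Matrix (Fin n) (Fin n) ℂ →ₗ[ℂ] Matrix (Fin r) (Fin r) ℂ) : Prop :=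
  ∃ (N : ℕ) (V W : Fin N → Matrix (Fin n) (Fin r) ℂ),
    ∀ X : Matrix (Fin n) (Fin n) ℂ,
      H X = (∑ p, (V p)ᴴ * X * V p) + ∑ p, (W p)ᴴ * Xᵀ * W p

/-!
A decomposable map has a Choi matrix that pairs nonnegatively with every positive semidefinite `ρ`
whose partial transpose is positive semidefinite. Now let `Φ` be a decomposable map such
that `Φ (x xᴴ)` is positive definite for all `x ≠ 0`, while its Choi matrix is orthogonal to some
nonzero `ρ` as above. By compactness of the unit spheres `Φ - ε tr(·) 1` is still positive for some
`ε > 0`, but its Choi matrix pairs with `ρ` to `-ε tr ρ < 0`, so it is not decomposable.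

For `3 × 3` take `ρ` to be the projection onto the complement of the Tiles unextendible product
basis of Bennett et al.; for `2 × 4` take Horodecki's state with positive partial transpose. The
coefficients of `Φ` are the kernel vectors of `ρ` and of its partial transpose. Trace duality
exchanges the two dimensions, and compressions transport the example to all larger dimensions.
-/

section QuadraticForm

variable {m : Type*} [Fintype m]

lemma trace_mul_vecMulVec (M : Matrix m m ℂ) (v w : m → ℂ) :
    (M * vecMulVec v w).trace = w ⬝ᵥ M *ᵥ v := by
  rw [mul_vecMulVec, trace_vecMulVec, dotProduct_comm]

lemma star_dotProduct_vecMulVec_mulVec (u y : m → ℂ) :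
    star y ⬝ᵥ vecMulVec u (star u) *ᵥ y = ((‖star u ⬝ᵥ y‖ ^ 2 : ℝ) : ℂ) := by
  rw [vecMulVec_mulVec, op_smul_eq_smul, dotProduct_smul, smul_eq_mul,
    star_dotProduct y u, Complex.star_def, Complex.mul_conj', Complex.ofReal_pow]

lemma posSemidef_of_forall_dotProduct_mulVec_nonneg {M : Matrix m m ℂ}
    (hM : ∀ y, 0 ≤ star y ⬝ᵥ M *ᵥ y) : M.PosSemidef := by
  classical
  refine .of_dotProduct_mulVec_nonneg (isSymmetric_toEuclideanLin_iff.1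
    ((LinearMap.isSymmetric_iff_inner_map_self_real _).2 fun y ↦ ?_)) hM
  have hreal : star (star y.ofLp ⬝ᵥ M *ᵥ y.ofLp) = star y.ofLp ⬝ᵥ M *ᵥ y.ofLp :=
    (IsSelfAdjoint.of_nonneg (hM y.ofLp)).star_eq
  rw [EuclideanSpace.inner_eq_star_dotProduct, dotProduct_star, dotProduct_comm]
  exact congrArg star hreal

end QuadraticForm

section Maps

variable {l m n o : Type*}

/-- Positivity of a linear map between matrix algebras: it preserves positive semidefiniteness. -/
def IsPositiveMap (H : Matrix m m ℂ →ₗ[ℂ] Matrix n n ℂ) : Prop :=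
  ∀ P : Matrix m m ℂ, P.PosSemidef → (H P).PosSemidef

lemma isPositiveMap_iff_forall_dotProduct_nonneg [Finite m] [Fintype n]
    {H : Matrix m m ℂ →ₗ[ℂ] Matrix n n ℂ} :
    IsPositiveMap H ↔ ∀ x y, 0 ≤ star y ⬝ᵥ H (vecMulVec x (star x)) *ᵥ y := by
  refine ⟨fun hH x y ↦ (hH _ (posSemidef_vecMulVec_self_star x)).dotProduct_mulVec_nonneg y,
    fun hH P hP ↦ ?_⟩
  cases nonempty_fintype m
  obtain ⟨k, x, rfl⟩ := posSemidef_iff_eq_sum_vecMulVec.1 hP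
  rw [map_sum]
  exact posSemidef_sum _ fun p _ ↦ posSemidef_of_forall_dotProduct_mulVec_nonneg (hH (x p))

variable [Fintype m]

/-- The congruence `X ↦ Vᴴ X V`. -/
def congruenceMap (V : Matrix m n ℂ) : Matrix m m ℂ →ₗ[ℂ] Matrix n n ℂ where
  toFun X := Vᴴ * X * V
  map_add' X Y := by rw [Matrix.mul_add, Matrix.add_mul]
  map_smul' c X := by rw [Matrix.mul_smul, Matrix.smul_mul, RingHom.id_apply]

lemma congruenceMap_apply (V : Matrix m n ℂ) (X : Matrix m m ℂ) :
    congruenceMap V X = Vᴴ * X * V := rfl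

lemma isPositiveMap_congruenceMap [Finite n] (V : Matrix m n ℂ) : IsPositiveMap (congruenceMap V) :=
  fun _ hP ↦ hP.conjTranspose_mul_mul_same V

lemma congruenceMap_congruenceMap_conjTranspose [Fintype n] [DecidableEq n] {Q : Matrix m n ℂ}
    (hQ : Qᴴ * Q = 1) (X : Matrix n n ℂ) : congruenceMap Q (congruenceMap Qᴴ X) = X :=
  calc Qᴴ * (Qᴴᴴ * X * Qᴴ) * Q = Qᴴ * Q * X * (Qᴴ * Q) := by
        simp only [conjTranspose_conjTranspose, Matrix.mul_assoc]
    _ = X := by rw [hQ, Matrix.one_mul, Matrix.mul_one]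

lemma exists_conjTranspose_mul_self_eq_one [DecidableEq n] (f : n ↪ m) :
    ∃ Q : Matrix m n ℂ, Qᴴ * Q = 1 := by
  classical
  refine ⟨(1 : Matrix m m ℂ).submatrix id f, ?_⟩
  rw [conjTranspose_submatrix, conjTranspose_one, ← submatrix_mul _ _ _ _ _ Function.bijective_id,
    Matrix.mul_one, submatrix_one _ f.injective]

variable {ι κ : Type*} [Fintype ι] [Fintype κ]

/-- The decomposable map `X ↦ ∑ₚ Vₚᴴ X Vₚ + ∑ₚ Wₚᴴ Xᵀ Wₚ` with prescribed coefficients, indexed by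
arbitrary finite types. -/
def decomposableMap (V : ι → Matrix m n ℂ) (W : κ → Matrix m n ℂ) :
    Matrix m m ℂ →ₗ[ℂ] Matrix n n ℂ :=
  ∑ p, congruenceMap (V p) + ∑ p, congruenceMap (W p) ∘ₗ (transposeLinearEquiv m m ℂ ℂ).toLinearMap

lemma decomposableMap_apply (V : ι → Matrix m n ℂ) (W : κ → Matrix m n ℂ) (X : Matrix m m ℂ) :
    decomposableMap V W X = ∑ p, (V p)ᴴ * X * V p + ∑ p, (W p)ᴴ * Xᵀ * W p := by
  simp [decomposableMap, congruenceMap_apply]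

lemma isDecomposableMap_iff_exists_eq_decomposableMap {n r : ℕ}
    {H : Matrix (Fin n) (Fin n) ℂ →ₗ[ℂ] Matrix (Fin r) (Fin r) ℂ} :
    IsDecomposableMap H ↔
      ∃ (N : ℕ) (V W : Fin N → Matrix (Fin n) (Fin r) ℂ), H = decomposableMap V W := by
  simp only [IsDecomposableMap, LinearMap.ext_iff, decomposableMap_apply]

lemma decomposableMap_comp_congruenceMap [Fintype l] (V : ι → Matrix m n ℂ) (W : κ → Matrix m n ℂ)
    (C : Matrix l m ℂ) :
    decomposableMap V W ∘ₗ congruenceMap C =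
      decomposableMap (fun p ↦ C * V p) (fun p ↦ Cᴴᵀ * W p) := by
  ext1 X
  have hC : Cᴴᵀᴴ = Cᵀ := by ext; simp
  simp only [LinearMap.comp_apply, decomposableMap_apply, congruenceMap_apply, transpose_mul,
    conjTranspose_mul, hC, Matrix.mul_assoc]

lemma congruenceMap_comp_decomposableMap [Fintype n] (C : Matrix n o ℂ) (V : ι → Matrix m n ℂ)
    (W : κ → Matrix m n ℂ) :
    congruenceMap C ∘ₗ decomposableMap V W =
      decomposableMap (fun p ↦ V p * C) (fun p ↦ W p * C) := by
  ext1 X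
  simp only [LinearMap.comp_apply, decomposableMap_apply, congruenceMap_apply, Matrix.mul_add,
    Matrix.add_mul, Matrix.mul_sum, Matrix.sum_mul, conjTranspose_mul, Matrix.mul_assoc]

lemma IsDecomposableMap.comp_congruenceMap {k n r : ℕ}
    {H : Matrix (Fin n) (Fin n) ℂ →ₗ[ℂ] Matrix (Fin r) (Fin r) ℂ} (hH : IsDecomposableMap H)
    (C : Matrix (Fin k) (Fin n) ℂ) : IsDecomposableMap (H ∘ₗ congruenceMap C) := by
  obtain ⟨N, V, W, rfl⟩ := isDecomposableMap_iff_exists_eq_decomposableMap.1 hH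
  exact isDecomposableMap_iff_exists_eq_decomposableMap.2
    ⟨N, _, _, decomposableMap_comp_congruenceMap V W C⟩

lemma IsDecomposableMap.congruenceMap_comp {k n r : ℕ}
    {H : Matrix (Fin n) (Fin n) ℂ →ₗ[ℂ] Matrix (Fin r) (Fin r) ℂ} (hH : IsDecomposableMap H)
    (C : Matrix (Fin r) (Fin k) ℂ) : IsDecomposableMap (congruenceMap C ∘ₗ H) := by
  obtain ⟨N, V, W, rfl⟩ := isDecomposableMap_iff_exists_eq_decomposableMap.1 hH
  exact isDecomposableMap_iff_exists_eq_decomposableMap.2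
    ⟨N, _, _, congruenceMap_comp_decomposableMap C V W⟩

lemma decomposableMap_vecMulVec (V : ι → Matrix m n ℂ) (W : κ → Matrix m n ℂ) (x : m → ℂ) :
    decomposableMap V W (vecMulVec x (star x)) =
      ∑ p, vecMulVec ((V p)ᴴ *ᵥ x) (star ((V p)ᴴ *ᵥ x)) +
        ∑ p, vecMulVec ((W p)ᴴ *ᵥ star x) (star ((W p)ᴴ *ᵥ star x)) := by
  simp only [decomposableMap_apply, transpose_vecMulVec, mul_vecMulVec, vecMulVec_mul, star_mulVec,
    conjTranspose_conjTranspose, star_star]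

lemma dotProduct_decomposableMap_vecMulVec [Fintype n] (V : ι → Matrix m n ℂ) (W : κ → Matrix m n ℂ)
    (x : m → ℂ) (y : n → ℂ) :
    star y ⬝ᵥ decomposableMap V W (vecMulVec x (star x)) *ᵥ y =
      ((∑ p, ‖star x ⬝ᵥ V p *ᵥ y‖ ^ 2 + ∑ p, ‖x ⬝ᵥ W p *ᵥ y‖ ^ 2 : ℝ) : ℂ) := by
  simp only [decomposableMap_vecMulVec, add_mulVec, sum_mulVec, dotProduct_add, dotProduct_sum,
    star_dotProduct_vecMulVec_mulVec]
  simp only [star_mulVec, conjTranspose_conjTranspose, star_star, ← dotProduct_mulVec,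
    Complex.ofReal_add, Complex.ofReal_sum]

lemma posDef_decomposableMap_vecMulVec [Fintype n] {V : ι → Matrix m n ℂ} {W : κ → Matrix m n ℂ}
    (hVW : ∀ x y, (∀ p, star x ⬝ᵥ V p *ᵥ y = 0) → (∀ p, x ⬝ᵥ W p *ᵥ y = 0) → x = 0 ∨ y = 0)
    {x : m → ℂ} (hx : x ≠ 0) : (decomposableMap V W (vecMulVec x (star x))).PosDef := by
  have hform := dotProduct_decomposableMap_vecMulVec V W x
  have hpsd : (decomposableMap V W (vecMulVec x (star x))).PosSemidef :=
    posSemidef_of_forall_dotProduct_mulVec_nonneg fun y ↦ by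
      rw [hform, Complex.zero_le_real]
      positivity
  refine .of_dotProduct_mulVec_pos hpsd.isHermitian fun y hy ↦ ?_
  refine (hpsd.dotProduct_mulVec_nonneg y).lt_of_ne' fun hzero ↦ ?_
  rw [hform, Complex.ofReal_eq_zero,
    add_eq_zero_iff_of_nonneg (by positivity) (by positivity),
    Finset.sum_eq_zero_iff_of_nonneg (fun _ _ ↦ by positivity),
    Finset.sum_eq_zero_iff_of_nonneg (fun _ _ ↦ by positivity)] at hzero
  simp only [Finset.mem_univ, forall_const, sq_eq_zero_iff, norm_eq_zero] at hzero
  exact (hVW x y hzero.1 hzero.2).elim hx hy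

end Maps

section Dual

variable {m n : Type*} [Fintype n] [DecidableEq m]

/-- The dual of `H` under the bilinear pairings `(X, Y) ↦ tr (X Y)` on both matrix algebras. -/
def traceDual (H : Matrix m m ℂ →ₗ[ℂ] Matrix n n ℂ) : Matrix n n ℂ →ₗ[ℂ] Matrix m m ℂ where
  toFun Y := of fun i j ↦ (Y * H (single j i 1)).trace
  map_add' Y Z := by ext; simp [Matrix.add_mul]
  map_smul' c Y := by ext; simp

lemma trace_traceDual_mul [Fintype m] (H : Matrix m m ℂ →ₗ[ℂ] Matrix n n ℂ) (Y : Matrix n n ℂ)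
    (X : Matrix m m ℂ) : (traceDual H Y * X).trace = (Y * H X).trace := by
  conv_rhs => rw [matrix_eq_sum_single X]
  have hsingle (i j : m) : H (single i j (X i j)) = X i j • H (single i j 1) := by
    rw [← map_smul, smul_single, smul_eq_mul, mul_one]
  simp only [map_sum, Matrix.mul_sum, trace_sum, hsingle, Matrix.mul_smul, trace_smul]
  rw [Finset.sum_comm]
  simp [trace, mul_apply, traceDual, mul_comm]

lemma traceDual_traceDual [Fintype m] [DecidableEq n] (H : Matrix m m ℂ →ₗ[ℂ] Matrix n n ℂ) :
    traceDual (traceDual H) = H := by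
  ext1 X
  refine ext_iff_trace_mul_left.2 fun Y ↦ ?_
  rw [trace_mul_comm, trace_traceDual_mul, trace_mul_comm, trace_traceDual_mul]

lemma IsPositiveMap.traceDual [Finite m] {H : Matrix m m ℂ →ₗ[ℂ] Matrix n n ℂ}
    (hH : IsPositiveMap H) : IsPositiveMap (traceDual H) := by
  cases nonempty_fintype m
  rw [isPositiveMap_iff_forall_dotProduct_nonneg] at hH ⊢
  intro x y
  rw [← trace_mul_vecMulVec, trace_traceDual_mul, trace_mul_comm, trace_mul_vecMulVec]
  exact hH y x

lemma traceDual_decomposableMap [Fintype m] {ι κ : Type*} [Fintype ι] [Fintype κ]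
    (V : ι → Matrix m n ℂ) (W : κ → Matrix m n ℂ) :
    traceDual (decomposableMap V W) = decomposableMap (fun p ↦ (V p)ᴴ) (fun p ↦ (W p)ᵀ) := by
  ext1 Y
  refine ext_iff_trace_mul_right.2 fun X ↦ ?_
  have hV (p : ι) : (Y * ((V p)ᴴ * X * V p)).trace = (V p * Y * (V p)ᴴ * X).trace := by
    rw [← Matrix.mul_assoc, trace_mul_comm, ← Matrix.mul_assoc, ← Matrix.mul_assoc]
  have hW (p : κ) : (Y * ((W p)ᴴ * Xᵀ * W p)).trace = ((W p)ᴴᵀ * Yᵀ * (W p)ᵀ * X).trace := by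
    rw [← trace_transpose, transpose_mul, transpose_mul, transpose_mul, transpose_transpose,
      trace_mul_comm, ← Matrix.mul_assoc, ← Matrix.mul_assoc, trace_mul_comm]
    simp only [Matrix.mul_assoc]
  simp only [trace_traceDual_mul, decomposableMap_apply, Matrix.mul_add, Matrix.add_mul,
    Matrix.mul_sum, Matrix.sum_mul, trace_add, trace_sum, hV, hW, conjTranspose_conjTranspose]
  rfl

lemma IsDecomposableMap.traceDual {n r : ℕ}
    {H : Matrix (Fin n) (Fin n) ℂ →ₗ[ℂ] Matrix (Fin r) (Fin r) ℂ} (hH : IsDecomposableMap H) :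
    IsDecomposableMap (traceDual H) := by
  obtain ⟨N, V, W, rfl⟩ := isDecomposableMap_iff_exists_eq_decomposableMap.1 hH
  exact isDecomposableMap_iff_exists_eq_decomposableMap.2 ⟨N, _, _, traceDual_decomposableMap V W⟩

end Dual

/-- The existence of a positive nondecomposable map `M_n(ℂ) → M_r(ℂ)`. -/
def HasPositiveNondecomposableMap (n r : ℕ) : Prop :=
  ∃ H : Matrix (Fin n) (Fin n) ℂ →ₗ[ℂ] Matrix (Fin r) (Fin r) ℂ,
    IsPositiveMap H ∧ ¬ IsDecomposableMap H

namespace HasPositiveNondecomposableMap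

variable {n r n' r' : ℕ}

lemma symm (h : HasPositiveNondecomposableMap n r) : HasPositiveNondecomposableMap r n := by
  obtain ⟨H, hpos, hdec⟩ := h
  refine ⟨traceDual H, hpos.traceDual, fun hdual ↦ hdec ?_⟩
  rw [← traceDual_traceDual H]
  exact hdual.traceDual

lemma mono (h : HasPositiveNondecomposableMap n r) (hn : n ≤ n') (hr : r ≤ r') :
    HasPositiveNondecomposableMap n' r' := by
  obtain ⟨H, hpos, hdec⟩ := h
  obtain ⟨Q, hQ⟩ := exists_conjTranspose_mul_self_eq_one (Fin.castLEEmb hn)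
  obtain ⟨R, hR⟩ := exists_conjTranspose_mul_self_eq_one (Fin.castLEEmb hr)
  have hcompress : congruenceMap R ∘ₗ (congruenceMap Rᴴ ∘ₗ H ∘ₗ congruenceMap Q) ∘ₗ
      congruenceMap Qᴴ = H := by
    ext1 X
    simp only [LinearMap.comp_apply, congruenceMap_congruenceMap_conjTranspose hQ,
      congruenceMap_congruenceMap_conjTranspose hR]
  refine ⟨congruenceMap Rᴴ ∘ₗ H ∘ₗ congruenceMap Q, fun P hP ↦ ?_, fun hdec' ↦ hdec ?_⟩
  · exact isPositiveMap_congruenceMap _ _ (hpos _ (isPositiveMap_congruenceMap _ _ hP))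
  · rw [← hcompress]
    exact (hdec'.comp_congruenceMap Qᴴ).congruenceMap_comp R

end HasPositiveNondecomposableMap

section Compactness

variable {E F : Type*} [NormedAddCommGroup E] [NormedSpace ℝ E] [ProperSpace E]
  [NormedAddCommGroup F] [NormedSpace ℝ F] [ProperSpace F]

lemma exists_pos_mul_norm_sq_mul_norm_sq_le {f : E → F → ℝ}
    (hcont : Continuous fun z : E × F ↦ f z.1 z.2)
    (hhom : ∀ (a b : ℝ) (x : E) (y : F), f (a • x) (b • y) = a ^ 2 * b ^ 2 * f x y)
    (hpos : ∀ x y, x ≠ 0 → y ≠ 0 → 0 < f x y) :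
    ∃ ε > 0, ∀ x y, ε * (‖x‖ ^ 2 * ‖y‖ ^ 2) ≤ f x y := by
  have hK : IsCompact (Metric.sphere (0 : E) 1 ×ˢ Metric.sphere (0 : F) 1) :=
    (isCompact_sphere 0 1).prod (isCompact_sphere 0 1)
  have hposK : ∀ z ∈ Metric.sphere (0 : E) 1 ×ˢ Metric.sphere (0 : F) 1, 0 < f z.1 z.2 :=
    fun z hz ↦ hpos _ _ (ne_zero_of_mem_unit_sphere ⟨z.1, hz.1⟩)
      (ne_zero_of_mem_unit_sphere ⟨z.2, hz.2⟩)
  obtain ⟨ε, hε, hle⟩ := hK.exists_forall_le' hcont.continuousOn hposK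
  refine ⟨ε, hε, fun x y ↦ ?_⟩
  have hsplit := hhom ‖x‖ ‖y‖ (‖x‖⁻¹ • x) (‖y‖⁻¹ • y)
  rcases eq_or_ne x 0 with rfl | hx
  · simpa using (hhom 0 1 0 y).ge
  rcases eq_or_ne y 0 with rfl | hy
  · simpa using (hhom 1 0 x 0).ge
  rw [smul_inv_smul₀ (norm_ne_zero_iff.2 hx), smul_inv_smul₀ (norm_ne_zero_iff.2 hy)] at hsplit
  rw [hsplit, mul_comm ε]
  gcongr
  exact hle (‖x‖⁻¹ • x, ‖y‖⁻¹ • y)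
    ⟨by simp [norm_smul, hx], by simp [norm_smul, hy]⟩

end Compactness

section Witness

variable {m n : Type*}

lemma star_ofLp_dotProduct_ofLp [Fintype m] (x : EuclideanSpace ℂ m) :
    star x.ofLp ⬝ᵥ x.ofLp = ((‖x‖ ^ 2 : ℝ) : ℂ) := by
  rw [dotProduct_comm, ← EuclideanSpace.inner_eq_star_dotProduct, inner_self_eq_norm_sq_to_K,
    Complex.ofReal_pow]
  rfl

/-- The completely depolarizing map `X ↦ tr(X) • 1`. -/
def depolarizingMap (m n : Type*) [Fintype m] [DecidableEq n] :
    Matrix m m ℂ →ₗ[ℂ] Matrix n n ℂ :=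
  (traceLinearMap m ℂ ℂ).smulRight 1

lemma depolarizingMap_apply [Fintype m] [DecidableEq n] (X : Matrix m m ℂ) :
    depolarizingMap m n X = X.trace • 1 := rfl

lemma dotProduct_depolarizingMap_vecMulVec [Fintype m] [Fintype n] [DecidableEq n]
    (x : EuclideanSpace ℂ m) (y : EuclideanSpace ℂ n) :
    star y.ofLp ⬝ᵥ depolarizingMap m n (vecMulVec x.ofLp (star x.ofLp)) *ᵥ y.ofLp =
      ((‖x‖ ^ 2 * ‖y‖ ^ 2 : ℝ) : ℂ) := by
  rw [depolarizingMap_apply, trace_vecMulVec, smul_mulVec, one_mulVec, dotProduct_smul,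
    dotProduct_comm, star_ofLp_dotProduct_ofLp, star_ofLp_dotProduct_ofLp, smul_eq_mul,
    ← Complex.ofReal_mul]

lemma exists_pos_isPositiveMap_sub_smul_depolarizingMap [Fintype m] [Finite n] [DecidableEq n]
    {Φ : Matrix m m ℂ →ₗ[ℂ] Matrix n n ℂ}
    (hΦ : ∀ x, x ≠ 0 → (Φ (vecMulVec x (star x))).PosDef) :
    ∃ ε : ℝ, 0 < ε ∧ IsPositiveMap (Φ - (ε : ℂ) • depolarizingMap m n) := by
  cases nonempty_fintype n
  let form (x : EuclideanSpace ℂ m) (y : EuclideanSpace ℂ n) : ℂ :=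
    star y.ofLp ⬝ᵥ Φ (vecMulVec x.ofLp (star x.ofLp)) *ᵥ y.ofLp
  have hcont : Continuous fun z : EuclideanSpace ℂ m × EuclideanSpace ℂ n ↦ (form z.1 z.2).re := by
    have hΦcont : Continuous Φ := Φ.continuous_of_finiteDimensional
    fun_prop
  have hhom (a b : ℝ) (x : EuclideanSpace ℂ m) (y : EuclideanSpace ℂ n) :
      (form (a • x) (b • y)).re = a ^ 2 * b ^ 2 * (form x y).re := by
    simp only [form, WithLp.ofLp_smul, star_smul, star_trivial, vecMulVec_smul, smul_vecMulVec,
      Φ.map_smul_of_tower, mulVec_smul, smul_mulVec, dotProduct_smul, smul_dotProduct,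
      Complex.smul_re, smul_eq_mul]
    ring
  have hpos (x : EuclideanSpace ℂ m) (y : EuclideanSpace ℂ n) (hx : x ≠ 0) (hy : y ≠ 0) :
      0 < form x y :=
    (hΦ x.ofLp (by simpa using hx)).dotProduct_mulVec_pos (by simpa using hy)
  obtain ⟨ε, hε, hle⟩ := exists_pos_mul_norm_sq_mul_norm_sq_le hcont hhom
    fun x y hx hy ↦ (Complex.pos_iff.1 (hpos x y hx hy)).1
  refine ⟨ε, hε, isPositiveMap_iff_forall_dotProduct_nonneg.2 fun x y ↦ ?_⟩
  rw [LinearMap.sub_apply, LinearMap.smul_apply, sub_mulVec, smul_mulVec, dotProduct_sub,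
    dotProduct_smul, sub_nonneg, smul_eq_mul]
  rcases eq_or_ne x 0 with rfl | hx
  · simp
  have hreal : 0 ≤ form (.toLp 2 x) (.toLp 2 y) := (hΦ x hx).posSemidef.dotProduct_mulVec_nonneg y
  rw [dotProduct_depolarizingMap_vecMulVec (.toLp 2 x) (.toLp 2 y), ← Complex.ofReal_mul,
    Complex.le_def]
  exact ⟨hle _ _, (Complex.nonneg_iff.1 hreal).2⟩

end Witness

section Choi

variable {m n : Type*}

/-- Transposition of the second tensor factor of a matrix indexed by pairs. -/
def partialTranspose : Matrix (n × m) (n × m) ℂ →ₗ[ℂ] Matrix (n × m) (n × m) ℂ where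
  toFun M := of fun p q ↦ M (p.1, q.2) (q.1, p.2)
  map_add' _ _ := rfl
  map_smul' _ _ := rfl

lemma partialTranspose_apply (M : Matrix (n × m) (n × m) ℂ) (p q : n × m) :
    partialTranspose M p q = M (p.1, q.2) (q.1, p.2) := rfl

lemma trace_partialTranspose_mul [Fintype m] [Fintype n] (M N : Matrix (n × m) (n × m) ℂ) :
    (partialTranspose M * N).trace = (M * partialTranspose N).trace := by
  simp only [trace, diag_apply, mul_apply, partialTranspose_apply, Fintype.sum_prod_type]
  refine Finset.sum_congr rfl fun k _ ↦ ?_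
  rw [Finset.sum_comm]
  conv_rhs => rw [Finset.sum_comm]
  exact Finset.sum_congr rfl fun l _ ↦ Finset.sum_comm

variable [DecidableEq m]

/-- The Choi matrix of a linear map between matrix algebras. The index set `n × m` is the one of
`Matrix.vec`. -/
def choiMatrix : (Matrix m m ℂ →ₗ[ℂ] Matrix n n ℂ) →ₗ[ℂ] Matrix (n × m) (n × m) ℂ where
  toFun H := of fun p q ↦ H (single p.2 q.2 1) p.1 q.1
  map_add' _ _ := rfl
  map_smul' _ _ := rfl

lemma choiMatrix_apply (H : Matrix m m ℂ →ₗ[ℂ] Matrix n n ℂ) (p q : n × m) :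
    choiMatrix H p q = H (single p.2 q.2 1) p.1 q.1 := rfl

lemma choiMatrix_depolarizingMap [Fintype m] [DecidableEq n] :
    choiMatrix (depolarizingMap m n) = 1 := by
  ext ⟨k, i⟩ ⟨l, j⟩
  by_cases hij : i = j <;> by_cases hkl : k = l <;>
  simp [choiMatrix_apply, depolarizingMap_apply, hij, hkl, one_apply]

lemma choiMatrix_congruenceMap [Fintype m] (V : Matrix m n ℂ) :
    choiMatrix (congruenceMap V) = vecMulVec (star (vec V)) (vec V) := by
  ext p q
  simp [choiMatrix_apply, congruenceMap_apply, mul_apply, single_apply, vecMulVec_apply, vec,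
    ite_and]

lemma choiMatrix_comp_transpose (H : Matrix m m ℂ →ₗ[ℂ] Matrix n n ℂ) :
    choiMatrix (H ∘ₗ (transposeLinearEquiv m m ℂ ℂ).toLinearMap) =
      partialTranspose (choiMatrix H) := by
  ext p q
  simp [choiMatrix_apply, partialTranspose_apply]

lemma trace_mul_choiMatrix_decomposableMap [Fintype m] [Fintype n] {ι κ : Type*} [Fintype ι]
    [Fintype κ] (ρ : Matrix (n × m) (n × m) ℂ) (V : ι → Matrix m n ℂ) (W : κ → Matrix m n ℂ) :
    (ρ * choiMatrix (decomposableMap V W)).trace =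
      ∑ p, vec (V p) ⬝ᵥ ρ *ᵥ star (vec (V p)) +
        ∑ p, vec (W p) ⬝ᵥ partialTranspose ρ *ᵥ star (vec (W p)) := by
  simp only [decomposableMap, map_add, map_sum, choiMatrix_comp_transpose, choiMatrix_congruenceMap,
    Matrix.mul_add, Matrix.mul_sum, trace_add, trace_sum, ← trace_partialTranspose_mul,
    trace_mul_vecMulVec]

lemma trace_mul_choiMatrix_decomposableMap_nonneg [Fintype m] [Fintype n] {ι κ : Type*} [Fintype ι]
    [Fintype κ] {ρ : Matrix (n × m) (n × m) ℂ} (hρ : ρ.PosSemidef)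
    (hρΓ : (partialTranspose ρ).PosSemidef) (V : ι → Matrix m n ℂ) (W : κ → Matrix m n ℂ) :
    0 ≤ (ρ * choiMatrix (decomposableMap V W)).trace := by
  rw [trace_mul_choiMatrix_decomposableMap]
  refine add_nonneg (Finset.sum_nonneg fun p _ ↦ ?_) (Finset.sum_nonneg fun p _ ↦ ?_)
  · simpa using hρ.dotProduct_mulVec_nonneg (star (vec (V p)))
  · simpa using hρΓ.dotProduct_mulVec_nonneg (star (vec (W p)))

end Choi

theorem hasPositiveNondecomposableMap_of_ppt {n r : ℕ}
    {Φ : Matrix (Fin n) (Fin n) ℂ →ₗ[ℂ] Matrix (Fin r) (Fin r) ℂ}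
    (hΦ : ∀ x, x ≠ 0 → (Φ (vecMulVec x (star x))).PosDef)
    {ρ : Matrix (Fin r × Fin n) (Fin r × Fin n) ℂ} (hρ : ρ.PosSemidef)
    (hρΓ : (partialTranspose ρ).PosSemidef) (hρ0 : ρ ≠ 0)
    (horth : (ρ * choiMatrix Φ).trace = 0) : HasPositiveNondecomposableMap n r := by
  obtain ⟨ε, hε, hpos⟩ := exists_pos_isPositiveMap_sub_smul_depolarizingMap hΦ
  refine ⟨_, hpos, fun hdec ↦ ?_⟩
  obtain ⟨N, V, W, hVW⟩ := isDecomposableMap_iff_exists_eq_decomposableMap.1 hdec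
  have htrace : 0 < ρ.trace := hρ.trace_nonneg.lt_of_ne' (mt hρ.trace_eq_zero_iff.1 hρ0)
  have hpairing : 0 ≤ (ρ * choiMatrix (decomposableMap V W)).trace :=
    trace_mul_choiMatrix_decomposableMap_nonneg hρ hρΓ V W
  rw [← hVW, map_sub, map_smul, choiMatrix_depolarizingMap, Matrix.mul_sub, trace_sub, horth,
    Matrix.mul_smul, Matrix.mul_one, trace_smul, smul_eq_mul, zero_sub, neg_nonneg] at hpairing
  exact hpairing.not_gt (mul_pos (Complex.zero_lt_real.2 hε) htrace)

section OrthogonalComplement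

variable {k ι : Type*} [Fintype k] [DecidableEq k] [Fintype ι]

/-- For a pairwise orthogonal family `w`, the matrix of the orthogonal projection onto the
orthogonal complement of its span. Vanishing members of the family contribute nothing,
as `0⁻¹ = 0`. -/
noncomputable def orthogonalComplementMatrix (w : ι → k → ℂ) : Matrix k k ℂ :=
  1 - ∑ p, (star (w p) ⬝ᵥ w p)⁻¹ • vecMulVec (w p) (star (w p))

lemma isHermitian_orthogonalComplementMatrix (w : ι → k → ℂ) :
    (orthogonalComplementMatrix w).IsHermitian := by
  have hself (p : ι) : star ((star (w p) ⬝ᵥ w p)⁻¹) = (star (w p) ⬝ᵥ w p)⁻¹ := by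
    rw [star_inv₀, ← star_dotProduct]
  simp only [IsHermitian, orthogonalComplementMatrix, conjTranspose_sub, conjTranspose_one,
    conjTranspose_sum, conjTranspose_smul, conjTranspose_vecMulVec, star_star, hself]

lemma orthogonalComplementMatrix_mulVec (w : ι → k → ℂ) (v : k → ℂ) :
    orthogonalComplementMatrix w *ᵥ v =
      v - ∑ p, ((star (w p) ⬝ᵥ w p)⁻¹ * (star (w p) ⬝ᵥ v)) • w p := by
  simp only [orthogonalComplementMatrix, sub_mulVec, one_mulVec, sum_mulVec, smul_mulVec,
    vecMulVec_mulVec, op_smul_eq_smul, smul_smul]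

lemma orthogonalComplementMatrix_mulVec_self {w : ι → k → ℂ}
    (hw : Pairwise fun p q ↦ star (w p) ⬝ᵥ w q = 0) (q : ι) :
    orthogonalComplementMatrix w *ᵥ w q = 0 := by
  rw [orthogonalComplementMatrix_mulVec,
    Finset.sum_eq_single q (fun p _ hpq ↦ by rw [hw hpq, mul_zero, zero_smul]) (by simp)]
  rcases eq_or_ne (w q) 0 with hq | hq
  · simp [hq]
  · rw [inv_mul_cancel₀ (mt dotProduct_star_self_eq_zero.1 hq), one_smul, sub_self]

lemma posSemidef_orthogonalComplementMatrix {w : ι → k → ℂ}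
    (hw : Pairwise fun p q ↦ star (w p) ⬝ᵥ w q = 0) :
    (orthogonalComplementMatrix w).PosSemidef := by
  have hidem : orthogonalComplementMatrix w * orthogonalComplementMatrix w =
      orthogonalComplementMatrix w := by
    nth_rw 2 [orthogonalComplementMatrix]
    simp only [Matrix.mul_sub, Matrix.mul_one, Matrix.mul_sum, Matrix.mul_smul, mul_vecMulVec,
      orthogonalComplementMatrix_mulVec_self hw, zero_vecMulVec, smul_zero, Finset.sum_const_zero,
      sub_zero]
  have hpsd := posSemidef_conjTranspose_mul_self (orthogonalComplementMatrix w)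
  rwa [(isHermitian_orthogonalComplementMatrix w).eq, hidem] at hpsd

lemma orthogonalComplementMatrix_ne_zero (w : ι → k → ℂ)
    (hcard : Fintype.card ι < Fintype.card k) :
    orthogonalComplementMatrix w ≠ 0 := by
  have hker : LinearMap.ker (mulVecLin (of fun p ↦ star (w p))) ≠ ⊥ :=
    LinearMap.ker_ne_bot_of_finrank_lt (by simpa)
  obtain ⟨v, hv, hv0⟩ := Submodule.exists_mem_ne_zero_of_ne_bot hker
  have horth (p : ι) : star (w p) ⬝ᵥ v = 0 := congrFun hv p
  intro hzero
  have hfix := orthogonalComplementMatrix_mulVec w v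
  simp only [hzero, zero_mulVec, horth, mul_zero, zero_smul, Finset.sum_const_zero, sub_zero]
    at hfix
  exact hv0 hfix.symm

end OrthogonalComplement

section ProductVector

variable {m n : Type*}

lemma star_vec_vecMulVec (x : m → ℂ) (y : n → ℂ) :
    star (vec (vecMulVec x y)) = vec (vecMulVec (star x) (star y)) := by
  ext; simp [vec, vecMulVec_apply]

lemma star_vec_vecMulVec_dotProduct [Fintype m] [Fintype n] (x x' : m → ℂ) (y y' : n → ℂ) :
    star (vec (vecMulVec x y)) ⬝ᵥ vec (vecMulVec x' y') = (star x ⬝ᵥ x') * (star y ⬝ᵥ y') := by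
  rw [star_vec_dotProduct_vec, conjTranspose_vecMulVec, vecMulVec_mul_vecMulVec, trace_vecMulVec,
    dotProduct_smul, smul_eq_mul]

lemma partialTranspose_one [DecidableEq m] [DecidableEq n] :
    partialTranspose (1 : Matrix (n × m) (n × m) ℂ) = 1 := by
  ext p q
  simp only [partialTranspose_apply, one_apply, Prod.ext_iff]
  grind

lemma partialTranspose_vecMulVec_vec_vecMulVec (x : m → ℂ) (y : n → ℂ) :
    partialTranspose (vecMulVec (vec (vecMulVec x y)) (star (vec (vecMulVec x y)))) =
      vecMulVec (vec (vecMulVec (star x) y)) (star (vec (vecMulVec (star x) y))) := by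
  ext p q
  simp only [partialTranspose_apply, vecMulVec_apply, vec, Pi.star_apply, star_mul', star_star]
  ring

lemma partialTranspose_orthogonalComplementMatrix [Fintype m] [Fintype n] [DecidableEq m]
    [DecidableEq n] {ι : Type*} [Fintype ι] (x : ι → m → ℂ) (y : ι → n → ℂ) :
    partialTranspose (orthogonalComplementMatrix fun p ↦ vec (vecMulVec (x p) (y p))) =
      orthogonalComplementMatrix fun p ↦ vec (vecMulVec (star (x p)) (y p)) := by
  have hnorm (p : ι) : star (star (x p)) ⬝ᵥ star (x p) = star (x p) ⬝ᵥ x p := by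
    rw [star_star, dotProduct_comm]
  simp only [orthogonalComplementMatrix, map_sub, partialTranspose_one, map_sum, map_smul,
    partialTranspose_vecMulVec_vec_vecMulVec, star_vec_vecMulVec_dotProduct, hnorm]

end ProductVector

/-- An unextendible product basis: a family of fewer than `dim (ℂᵐ ⊗ ℂⁿ)` pairwise orthogonal
product vectors `aₚ ⊗ bₚ` such that no nonzero product vector is orthogonal to all of them. -/
structure IsUnextendibleProductBasis {m n ι : Type*} [Fintype m] [Fintype n] [Fintype ι]
    (a : ι → m → ℂ) (b : ι → n → ℂ) : Prop where
  orthogonal : Pairwise fun p q ↦ star (a p) ⬝ᵥ a q = 0 ∨ star (b p) ⬝ᵥ b q = 0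
  unextendible : ∀ x y, (∀ p, star (a p) ⬝ᵥ x = 0 ∨ star (b p) ⬝ᵥ y = 0) → x = 0 ∨ y = 0
  card_lt : Fintype.card ι < Fintype.card m * Fintype.card n

namespace IsUnextendibleProductBasis

variable {m n ι : Type*} [Fintype m] [Fintype n] [Fintype ι] {a : ι → m → ℂ} {b : ι → n → ℂ}

lemma pairwise_star_vec_dotProduct_eq_zero (h : IsUnextendibleProductBasis a b) :
    Pairwise fun p q ↦
      star (vec (vecMulVec (a p) (b p))) ⬝ᵥ vec (vecMulVec (a q) (b q)) = 0 := by
  simp only [star_vec_vecMulVec_dotProduct, mul_eq_zero]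
  exact h.orthogonal

lemma star_left (h : IsUnextendibleProductBasis a b) :
    IsUnextendibleProductBasis (fun p ↦ star (a p)) b where
  orthogonal p q hpq := by
    have hconj : star (star (a p)) ⬝ᵥ star (a q) = star (star (a p) ⬝ᵥ a q) := by
      rw [star_dotProduct_star, dotProduct_comm]
    simpa only [hconj, star_eq_zero] using h.orthogonal hpq
  unextendible x y hxy := by
    have hconj (p : ι) : star (a p) ⬝ᵥ star x = star (star (star (a p)) ⬝ᵥ x) := by
      rw [star_star, star_dotProduct_star, dotProduct_comm]
    have hx : star x = 0 ∨ y = 0 := h.unextendible (star x) y fun p ↦ by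
      simpa only [hconj, star_eq_zero] using hxy p
    simpa only [star_eq_zero] using hx
  card_lt := h.card_lt

end IsUnextendibleProductBasis

theorem IsUnextendibleProductBasis.hasPositiveNondecomposableMap {n r : ℕ} {ι : Type*} [Fintype ι]
    {a : ι → Fin n → ℂ} {b : ι → Fin r → ℂ} (h : IsUnextendibleProductBasis a b) :
    HasPositiveNondecomposableMap n r := by
  let V (p : ι) : Matrix (Fin n) (Fin r) ℂ := vecMulVec (a p) (star (b p))
  have hV (p : ι) : star (vec (V p)) = vec (vecMulVec (star (a p)) (b p)) := by
    rw [star_vec_vecMulVec, star_star]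
  have horth := h.star_left.pairwise_star_vec_dotProduct_eq_zero
  refine hasPositiveNondecomposableMap_of_ppt
    (fun x hx ↦ posDef_decomposableMap_vecMulVec (V := V) (W := Fin.elim0) ?_ hx)
    (posSemidef_orthogonalComplementMatrix horth) ?_
    (orthogonalComplementMatrix_ne_zero _ ?_) ?_
  · intro x y hxy _
    refine h.unextendible x y fun p ↦ ?_
    rw [← star_eq_zero, ← star_dotProduct, or_comm, ← mul_eq_zero]
    simpa only [V, vecMulVec_mulVec, op_smul_eq_smul, dotProduct_smul, smul_eq_mul] using hxy p
  · rw [partialTranspose_orthogonalComplementMatrix]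
    simp only [star_star]
    exact posSemidef_orthogonalComplementMatrix h.pairwise_star_vec_dotProduct_eq_zero
  · simpa [mul_comm] using h.card_lt
  · simp [trace_mul_choiMatrix_decomposableMap, hV, orthogonalComplementMatrix_mulVec_self horth]

theorem isUnextendibleProductBasis_tiles :
    IsUnextendibleProductBasis
      ![![1, 0, 0], ![0, 0, 1], ![1, -1, 0], ![0, 1, -1], ![1, 1, 1]]
      ![![1, -1, 0], ![0, 1, -1], ![0, 0, 1], ![1, 0, 0], (![1, 1, 1] : Fin 3 → ℂ)] where
  orthogonal p q hpq := by
    fin_cases p <;> fin_cases q <;> first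
    | exact absurd rfl hpq
    | simp [dotProduct, Fin.sum_univ_three]
  unextendible x y hxy := by
    -- Any three of the five vectors on either side are linearly independent, so by the pigeonhole
    -- principle `x` or `y` is orthogonal to a basis.
    simp only [dotProduct, Pi.star_apply, RCLike.star_def, Fin.sum_univ_three, cons_val', cons_val,
      cons_val_fin_one, cons_val_zero, cons_val_one, cons_val_succ, Fin.forall_fin_succ, map_one,
      one_mul, map_zero, zero_mul, add_zero, zero_add, map_neg, neg_mul, forall_const] at hxy
    simp only [funext_iff, Fin.forall_fin_succ, Pi.zero_apply, Fin.succ_zero_eq_one,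
      Fin.succ_one_eq_two, IsEmpty.forall_iff, and_true]
    grind
  card_lt := by simp

/-- Vectors of `ℂ² ⊗ ℂ⁴`, written as matrices, spanning the range of `horodeckiState`. -/
def horodeckiVector : Fin 5 → Matrix (Fin 2) (Fin 4) ℂ :=
  ![!![1, 0, 0, 0; 0, 1, 0, 0], !![0, 1, 0, 0; 0, 0, 1, 0], !![0, 0, 1, 0; 0, 0, 0, 1],
    !![0, 0, 0, 1; 0, 0, 0, 0], !![0, 0, 0, 0; 2, 0, 0, 1]]

/-- A positive multiple of Horodecki's state on `ℂ² ⊗ ℂ⁴` with parameter `b = 3 / 5`, for which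
`√(1 - b²)` is rational. It is entangled, but its partial transpose is positive semidefinite. -/
def horodeckiState : Matrix (Fin 4 × Fin 2) (Fin 4 × Fin 2) ℂ :=
  ∑ q, (![3, 3, 3, 3, 1] q : ℂ) •
    vecMulVec (vec (horodeckiVector q)) (star (vec (horodeckiVector q)))

/-- A basis of the kernel of `horodeckiState`, written as matrices. -/
def horodeckiKernel : Fin 3 → Matrix (Fin 2) (Fin 4) ℂ :=
  ![!![-1, 0, 0, 0; 0, 1, 0, 0], !![0, -1, 0, 0; 0, 0, 1, 0], !![0, 0, -2, 0; -1, 0, 0, 2]]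

lemma posSemidef_horodeckiState : horodeckiState.PosSemidef :=
  posSemidef_sum _ fun q _ ↦ (posSemidef_vecMulVec_self_star _).smul (by fin_cases q <;> simp)

lemma horodeckiState_apply (s t : Fin 4 × Fin 2) :
    horodeckiState s t = ∑ q, (![3, 3, 3, 3, 1] q : ℂ) *
      (horodeckiVector q s.2 s.1 * star (horodeckiVector q t.2 t.1)) := by
  simp only [horodeckiState, Matrix.sum_apply, Matrix.smul_apply, vecMulVec_apply, vec,
    Pi.star_apply, smul_eq_mul]

lemma horodeckiState_ne_zero : horodeckiState ≠ 0 := fun hzero ↦ by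
  have hentry : horodeckiState (0, 0) (0, 0) = 3 := by
    simp [horodeckiState_apply, horodeckiVector, Fin.sum_univ_succ]
  simp [hzero] at hentry

lemma partialTranspose_horodeckiState :
    partialTranspose horodeckiState = horodeckiState.submatrix
      (Equiv.prodCongr Fin.revPerm (.refl _)) (Equiv.prodCongr Fin.revPerm (.refl _)) := by
  ext ⟨k, i⟩ ⟨l, j⟩
  fin_cases i <;> fin_cases j <;> fin_cases k <;> fin_cases l <;>
    simp [partialTranspose_apply, horodeckiState_apply, horodeckiVector, Fin.sum_univ_succ,
      Complex.conj_ofNat] <;>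
    norm_num

lemma horodeckiState_mulVec_star_vec_horodeckiKernel (p : Fin 3) :
    horodeckiState *ᵥ star (vec (horodeckiKernel p)) = 0 := by
  have horth (q : Fin 5) :
      star (vec (horodeckiVector q)) ⬝ᵥ star (vec (horodeckiKernel p)) = 0 := by
    simp only [dotProduct, Pi.star_apply, vec]
    fin_cases p <;> fin_cases q <;>
      simp [horodeckiVector, horodeckiKernel, Fintype.sum_prod_type, Fin.sum_univ_succ]
  simp only [horodeckiState, sum_mulVec, smul_mulVec, vecMulVec_mulVec, horth, MulOpposite.op_zero,
    zero_smul, smul_zero, Finset.sum_const_zero]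

lemma eq_zero_or_eq_zero_of_horodecki_system {a b y₀ y₁ y₂ y₃ : ℂ}
    (h₀ : star a * y₀ = star b * y₁) (h₁ : star a * y₁ = star b * y₂)
    (h₂ : 2 * (star a * y₂) + star b * y₀ = 2 * (star b * y₃))
    (h₀' : a * y₃ = b * y₂) (h₁' : a * y₂ = b * y₁) (h₂' : 2 * (a * y₁) + b * y₃ = 2 * (b * y₀)) :
    (a = 0 ∧ b = 0) ∨ (y₀ = 0 ∧ y₁ = 0 ∧ y₂ = 0 ∧ y₃ = 0) := by
  have ha : star a = 0 ↔ a = 0 := star_eq_zero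
  have hb : star b = 0 ↔ b = 0 := star_eq_zero
  by_cases hab : a * star a = b * star b
  · by_cases ha0 : a = 0
    · grind
    -- Here `b / a` is unimodular and `yₖ = (b / a) ^ k * y₀`, so `h₂` leaves only `y₀ = 0`.
    have hstep : a * y₁ = b * y₀ :=
      mul_left_cancel₀ (mt ha.1 ha0) (by linear_combination y₁ * hab - b * h₀)
    grind
  · have hy₁ : y₁ = 0 := by
      refine (mul_eq_zero.1 ?_).resolve_left (sub_ne_zero.2 hab)
      linear_combination a * h₁ + star b * h₁'
    have hy₂ : y₂ = 0 := by
      refine (mul_eq_zero.1 ?_).resolve_left (sub_ne_zero.2 hab)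
      linear_combination b * h₁ + star a * h₁'
    grind

lemma eq_zero_or_eq_zero_of_horodeckiKernel {x : Fin 2 → ℂ} {y : Fin 4 → ℂ}
    (hV : ∀ p, star x ⬝ᵥ horodeckiKernel p *ᵥ y = 0)
    (hW : ∀ p, x ⬝ᵥ (horodeckiKernel p).submatrix id Fin.revPerm *ᵥ y = 0) : x = 0 ∨ y = 0 := by
  simp only [horodeckiKernel, dotProduct, mulVec, Pi.star_apply, Fin.sum_univ_two,
    Fin.sum_univ_four, Fin.forall_fin_succ, cons_val_zero, cons_val_one, cons_val_succ, cons_val,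
    cons_val', cons_val_fin_one, of_apply, submatrix_apply, id_eq, Fin.revPerm_apply,
    Fin.rev_zero, Fin.reduceLast, Fin.reduceRev, forall_const] at hV hW
  obtain ⟨hV₀, hV₁, hV₂⟩ := hV
  obtain ⟨hW₀, hW₁, hW₂⟩ := hW
  have hxy : (x 0 = 0 ∧ x 1 = 0) ∨ (y 0 = 0 ∧ y 1 = 0 ∧ y 2 = 0 ∧ y 3 = 0) :=
    eq_zero_or_eq_zero_of_horodecki_system
      (by linear_combination -hV₀) (by linear_combination -hV₁) (by linear_combination -hV₂)
      (by linear_combination -hW₀) (by linear_combination -hW₁) (by linear_combination -hW₂)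
  simpa [funext_iff, Fin.forall_fin_succ] using hxy

theorem hasPositiveNondecomposableMap_two_four : HasPositiveNondecomposableMap 2 4 := by
  let W (p : Fin 3) : Matrix (Fin 2) (Fin 4) ℂ := (horodeckiKernel p).submatrix id Fin.revPerm
  have hWker (p : Fin 3) : partialTranspose horodeckiState *ᵥ star (vec (W p)) = 0 := by
    have hW : star (vec (W p)) =
        star (vec (horodeckiKernel p)) ∘ Equiv.prodCongr Fin.revPerm (.refl _) := rfl
    rw [partialTranspose_horodeckiState, hW, submatrix_mulVec_equiv, Function.comp_assoc,
      Equiv.self_comp_symm, Function.comp_id, horodeckiState_mulVec_star_vec_horodeckiKernel]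
    rfl
  refine hasPositiveNondecomposableMap_of_ppt
    (fun x hx ↦ posDef_decomposableMap_vecMulVec (V := horodeckiKernel) (W := W)
      (fun _ _ ↦ eq_zero_or_eq_zero_of_horodeckiKernel) hx)
    posSemidef_horodeckiState ?_ horodeckiState_ne_zero ?_
  · rw [partialTranspose_horodeckiState]
    exact posSemidef_horodeckiState.submatrix _
  · simp only [trace_mul_choiMatrix_decomposableMap,
      horodeckiState_mulVec_star_vec_horodeckiKernel, hWker, dotProduct_zero,
      Finset.sum_const_zero, add_zero]

theorem exists_positive_nondecomposable_map_of_high_dimension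
    (n r : ℕ) (hn : 2 ≤ n) (hr : 2 ≤ r) (hdim : 6 < n * r) :
    ∃ H : Matrix (Fin n) (Fin n) ℂ →ₗ[ℂ] Matrix (Fin r) (Fin r) ℂ,
      (∀ P : Matrix (Fin n) (Fin n) ℂ, P.PosSemidef → (H P).PosSemidef) ∧
        ¬ IsDecomposableMap H := by
  by_cases hn4 : 4 ≤ n
  · exact hasPositiveNondecomposableMap_two_four.symm.mono hn4 hr
  by_cases hr4 : 4 ≤ r
  · exact hasPositiveNondecomposableMap_two_four.mono hn hr4
  have hn3 : 3 ≤ n := by by_contra!; interval_cases n; omega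
  have hr3 : 3 ≤ r := by by_contra!; interval_cases r; omega
  exact isUnextendibleProductBasis_tiles.hasPositiveNondecomposableMap.mono hn3 hr3
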